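/- arXiv:2410.10726 — 6 statements merged into one kernel-verified Lean document; each statement's English description precedes it below -/
import Mathlib

section
/- Let n ≥ 3 be an integer. For all integers ℓ, m with 0 ≤ ℓ ≤ 2^(n-2) − 1 and 0 ≤ m ≤ 2^(n-2), the congruence m·(1 + 5^ℓ) ≡ 2^(n-1) (mod 2^n) holds if and only if m = 2^(n-2). -/
/-! Since `5 ^ ℓ ≡ 1 [ZMOD 4]`, the factor `1 + 5 ^ ℓ` is twice an odd number. Cancelling the `2`
lowers the modulus to `2 ^ (n - 1)`, where the odd factor is a unit that fixes `2 ^ (n - 2)`. So the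
congruence says `m ≡ 2 ^ (n - 2) [ZMOD 2 ^ (n - 1)]`, and the bounds on `m` leave one solution. -/

theorem mul_odd_modEq_self {u : ℤ} (hu : Odd u) (d : ℤ) : d * u ≡ d [ZMOD d * 2] := by
  obtain ⟨v, rfl⟩ := hu
  exact Int.modEq_iff_dvd.mpr ⟨-v, by ring⟩

theorem mul_odd_modEq_two_pow_iff {u : ℤ} (hu : Odd u) (m : ℤ) (k : ℕ) :
    m * u ≡ 2 ^ k [ZMOD 2 ^ (k + 1)] ↔ m ≡ 2 ^ k [ZMOD 2 ^ (k + 1)] := by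
  have h_fix : 2 ^ k * u ≡ 2 ^ k [ZMOD 2 ^ (k + 1)] := mul_odd_modEq_self hu (2 ^ k)
  have h_coprime : Int.gcd (2 ^ (k + 1)) u = 1 :=
    Int.isCoprime_iff_gcd_eq_one.mp (Int.isCoprime_two_left.mpr hu).pow_left
  constructor
  · intro h
    simpa only [h_coprime, Nat.cast_one, Int.ediv_one] using
      Int.ModEq.cancel_right_div_gcd (by positivity) (h.trans h_fix.symm)
  · exact fun h ↦ (h.mul_right u).trans h_fix

theorem mul_one_add_modEq_two_pow_iff {a : ℤ} (ha : a ≡ 1 [ZMOD 4]) (m : ℤ) (k : ℕ) :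
    m * (1 + a) ≡ 2 ^ (k + 1) [ZMOD 2 ^ (k + 2)] ↔ m ≡ 2 ^ k [ZMOD 2 ^ (k + 1)] := by
  obtain ⟨u, hu, h_double⟩ : ∃ u, Odd u ∧ 1 + a = u * 2 := by
    obtain ⟨v, hv⟩ := ha.symm.dvd
    exact ⟨2 * v + 1, odd_two_mul_add_one v, by linarith⟩
  rw [h_double, ← mul_assoc, pow_succ _ k, pow_succ _ (k + 1),
    Int.ModEq.mul_right_cancel_iff' two_ne_zero]
  exact mul_odd_modEq_two_pow_iff hu m k

theorem modEq_iff_eq_of_abs_sub_lt {a b n : ℤ} (h : |b - a| < n) :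
    a ≡ b [ZMOD n] ↔ a = b :=
  ⟨fun h_mod ↦ (sub_eq_zero.mp (Int.eq_zero_of_abs_lt_dvd h_mod.dvd h)).symm,
    fun h_eq ↦ h_eq ▸ Int.ModEq.refl a⟩

theorem five_pow_modEq_one_four (ℓ : ℕ) : (5 : ℤ) ^ ℓ ≡ 1 [ZMOD 4] := by
  simpa only [one_pow] using (by decide : (5 : ℤ) ≡ 1 [ZMOD 4]).pow ℓ

theorem stmt_1_general {a : ℤ} (ha : a ≡ 1 [ZMOD 4]) {m : ℤ} {k : ℕ}
    (h_lower : -2 ^ k < m) (h_upper : m < 3 * 2 ^ k) :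
    m * (1 + a) ≡ 2 ^ (k + 1) [ZMOD 2 ^ (k + 2)] ↔ m = 2 ^ k := by
  have h_abs : |2 ^ k - m| < 2 ^ (k + 1) := by
    rw [abs_lt, pow_succ]
    constructor <;> linarith
  exact (mul_one_add_modEq_two_pow_iff ha m k).trans (modEq_iff_eq_of_abs_sub_lt h_abs)

/-- Lemma 2.16(b): for `n ≥ 3`, integers `0 ≤ ℓ ≤ 2^(n-2) - 1` and `0 ≤ m ≤ 2^(n-2)`,
`m * (1 + 5^ℓ) ≡ 2^(n-1) (mod 2^n)` if and only if `m = 2^(n-2)`. -/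
theorem stmt_1 (n : ℕ) (hn : 3 ≤ n) (ℓ m : ℕ)
    (hℓ : ℓ ≤ 2 ^ (n - 2) - 1) (hm : m ≤ 2 ^ (n - 2)) :
    ((m : ℤ) * (1 + 5 ^ ℓ) ≡ 2 ^ (n - 1) [ZMOD 2 ^ n]) ↔ m = 2 ^ (n - 2) := by
  obtain ⟨k, rfl⟩ := Nat.exists_eq_add_of_le' (by lia : 2 ≤ n)
  exact_mod_cast stmt_1_general (five_pow_modEq_one_four ℓ) (m := m) (k := k) (by grind) (by grind)
end

section
/- Let n ≥ 4 be an integer, let ℓ be an integer with 1 ≤ ℓ ≤ 2^(n-2) − 1, and set v = v₂(ℓ), the 2-adic valuation of ℓ. Then for every integer m with 0 ≤ m ≤ 2^(n-v-3), the congruence of integers m·(1 − 5^ℓ) ≡ 2^(n-1) (mod 2^n) holds if and only if m = 2^(n-v-3). -/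
/-!
A congruence `b ≡ 2 ^ j` modulo `2 ^ (j + 1)` says exactly that `b` has 2-adic valuation `j`.
By lifting the exponent, `1 - x ^ ℓ` has valuation `v₂(ℓ) + 2` whenever `x ≡ 5` modulo `8`, so the
congruence for `m * (1 - x ^ ℓ)` prescribes the valuation `n - v₂(ℓ) - 3` for `m`. The only
multiplier `m ≤ 2 ^ k` of valuation `k` is `2 ^ k` itself.
-/

theorem modEq_two_pow_iff_emultiplicity_eq {b : ℤ} {j : ℕ} :
    b ≡ 2 ^ j [ZMOD 2 ^ (j + 1)] ↔ emultiplicity 2 b = j := by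
  have hne : (2 : ℤ) ^ j ≠ 0 := by positivity
  rw [emultiplicity_eq_coe]
  constructor
  · intro h
    have hdvd : (2 : ℤ) ^ j ∣ b := (h.of_dvd (pow_dvd_pow 2 j.le_succ)).dvd_iff.mpr dvd_rfl
    refine ⟨hdvd, fun hsucc ↦ ?_⟩
    have hself : (2 : ℤ) ^ (j + 1) ∣ 2 ^ j := h.dvd_iff.mp hsucc
    rw [pow_dvd_pow_iff two_ne_zero Int.prime_two.not_isUnit] at hself
    omega
  · rintro ⟨⟨c, rfl⟩, hsucc⟩
    rw [pow_succ, mul_dvd_mul_iff_left hne] at hsucc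
    have hc : c ≡ 1 [ZMOD 2] := Int.emod_two_ne_zero.mp (mt Int.dvd_of_emod_eq_zero hsucc)
    simpa only [pow_succ, mul_one] using hc.mul_left' (c := 2 ^ j)

theorem emultiplicity_eq_iff_eq_pow_of_le {p k m : ℕ} (hp : 1 < p) (hm : m ≤ p ^ k) :
    emultiplicity p m = k ↔ m = p ^ k := by
  constructor
  · intro h
    obtain ⟨hdvd, hsucc⟩ := emultiplicity_eq_coe.mp h
    have hm0 : m ≠ 0 := by
      rintro rfl
      exact hsucc (dvd_zero _)
    exact hm.antisymm (Nat.le_of_dvd hm0.pos hdvd)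
  · rintro rfl
    exact emultiplicity_pow_self (by omega) (by simpa using hp.ne') k

theorem emultiplicity_two_one_sub_pow_of_modEq_five {x : ℤ} (hx : x ≡ 5 [ZMOD 8]) (ℓ : ℕ) :
    emultiplicity 2 (1 - x ^ ℓ) = emultiplicity 2 ℓ + 2 := by
  have hx_mod : x % 8 = 5 := hx
  have hbase : emultiplicity 2 (1 - x) = 2 := by
    refine emultiplicity_eq_coe (n := 2).mpr ⟨?_, ?_⟩ <;> omega
  have hlift := Int.two_pow_sub_pow' (x := 1) (y := x) ℓ (by omega) (by norm_num)
  have hcast : emultiplicity (2 : ℤ) ℓ = emultiplicity 2 ℓ := Int.natCast_emultiplicity 2 ℓ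
  rw [← one_pow ℓ, hlift, hbase, hcast, add_comm]

theorem padicValNat_lt_of_lt_pow {p k a : ℕ} (ha : a ≠ 0) (h : a < p ^ k) :
    padicValNat p a < k :=
  (padicValNat_le_nat_log a).trans_lt (Nat.log_lt_of_lt_pow ha h)

theorem stmt_2_general {x : ℤ} (hx : x ≡ 5 [ZMOD 8]) {n ℓ v m : ℕ} (hℓ : ℓ ≠ 0)
    (hv : v = padicValNat 2 ℓ) (hvn : v + 3 ≤ n) (hm : m ≤ 2 ^ (n - v - 3)) :
    (m : ℤ) * (1 - x ^ ℓ) ≡ 2 ^ (n - 1) [ZMOD 2 ^ n] ↔ m = 2 ^ (n - v - 3) := by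
  obtain ⟨k, rfl⟩ := Nat.exists_eq_add_of_le' hvn
  have hk : k + (v + 3) - v - 3 = k := by omega
  rw [hk] at hm ⊢
  have hval : emultiplicity 2 (1 - x ^ ℓ) = ((v + 2 : ℕ) : ℕ∞) := by
    rw [emultiplicity_two_one_sub_pow_of_modEq_five hx, ← padicValNat_eq_emultiplicity hℓ, ← hv,
      Nat.cast_add, Nat.cast_ofNat]
  have hcast : emultiplicity (2 : ℤ) m = emultiplicity 2 m := Int.natCast_emultiplicity 2 m
  calc (m : ℤ) * (1 - x ^ ℓ) ≡ 2 ^ (k + (v + 2)) [ZMOD 2 ^ (k + (v + 2) + 1)]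
      ↔ emultiplicity 2 (m * (1 - x ^ ℓ)) = (k + (v + 2) : ℕ) :=
        modEq_two_pow_iff_emultiplicity_eq
    _ ↔ emultiplicity 2 m = k := by
      rw [emultiplicity_mul Int.prime_two, hval, hcast, Nat.cast_add k,
        (ENat.add_left_injective_of_ne_top (ENat.natCast_ne_top (v + 2))).eq_iff]
    _ ↔ m = 2 ^ k := emultiplicity_eq_iff_eq_pow_of_le one_lt_two hm

/-- Lemma 2.16(c): for `n ≥ 4`, `1 ≤ ℓ ≤ 2^(n-2) - 1` with `v = v₂(ℓ)`, and
`0 ≤ m ≤ 2^(n-v-3)`, the congruence `m * (1 - 5^ℓ) ≡ 2^(n-1) (mod 2^n)` holds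
if and only if `m = 2^(n-v-3)`. -/
theorem stmt_2 (n : ℕ) (hn : 4 ≤ n) (ℓ : ℕ) (hℓ1 : 1 ≤ ℓ) (hℓ2 : ℓ ≤ 2 ^ (n - 2) - 1)
    (v : ℕ) (hv : v = padicValNat 2 ℓ) (m : ℕ) (hm : m ≤ 2 ^ (n - v - 3)) :
    ((m : ℤ) * (1 - 5 ^ ℓ) ≡ 2 ^ (n - 1) [ZMOD 2 ^ n]) ↔ m = 2 ^ (n - v - 3) := by
  have hvn : padicValNat 2 ℓ < n - 2 := padicValNat_lt_of_lt_pow (by omega) (by omega)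
  exact stmt_2_general (Int.ModEq.refl 5) (by omega) hv (by omega) hm
end

section
/- Let F be a field and D a finite-dimensional central division algebra over F, i.e., a division ring that is an F-algebra, finite-dimensional over F, whose center is exactly (the image of) F. Let L be a commutative F-subalgebra of D that is maximal commutative, in the sense that every element of D that commutes with every element of L belongs to L; assume L is a field and that the extension L/F is Galois, with Galois group G = Aut_F(L). Then there exists a family of units e : G → Dˣ with e(id) = 1 such that: (i) the family (e(φ))_{φ ∈ G} is a basis of D as a left L-vector space (with scalar multiplication given by left multiplication by elements of L inside D); (ii) e(φ) · x = φ(x) · e(φ) for every x ∈ L and every φ ∈ G (identifying elements of L with their images in D); (iii) for all φ₁, φ₂ ∈ G there exists a unit μ(φ₁, φ₂) ∈ Lˣ with e(φ₁) · e(φ₂) = μ(φ₁, φ₂) · e(φ₁ ∘ φ₂), and μ satisfies the 2-cocycle identity φ₁(μ(φ₂, φ₃)) · μ(φ₁, φ₂ ∘ φ₃) = μ(φ₁, φ₂) · μ(φ₁ ∘ φ₂, φ₃) for all φ₁, φ₂, φ₃ ∈ G. -/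
/-!
Besides its left `L`-structure, `D` carries the commuting `L`-linear action of `L` by right
multiplication. A primitive element of `L / F` acts on the right as an operator whose minimal
polynomial splits over `L` with simple roots, so `D` is graded by `Gal(L/F)`: it is the direct sum
of the subspaces `W φ` of all `d` with `d * x = φ x * d`, and `W 1 = L` by maximality. If
`d ∈ W φ` is nonzero, the two-sided ideal it generates contains `1`, so it meets `W 1 = L`;
this makes `d` a unit. The `φ` with `W φ ≠ 0` therefore form a group, whose fixed field
commutes with every `W φ`, hence is central and equals `F`; by the Galois correspondence
every `W φ` is nonzero, and then `W φ = L * e φ` for any unit `e φ` in it. Associativity of `D`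
is the cocycle identity.
-/

theorem one_mem_of_forall_mul_mul_mem {R : Type*} [Ring R] [IsSimpleRing R] {N : AddSubgroup R}
    {w : R} (hw : w ≠ 0) (hN : ∀ a b, a * w * b ∈ N) : 1 ∈ N := by
  have one_mem_span : 1 ∈ TwoSidedIdeal.span {w} :=
    IsSimpleRing.one_mem_of_ne_zero_mem _ hw (TwoSidedIdeal.subset_span rfl)
  rw [TwoSidedIdeal.mem_span_iff_mem_addSubgroup_closure] at one_mem_span
  refine (AddSubgroup.closure_le N).2 ?_ one_mem_span
  rintro _ ⟨_, ⟨a, -, _, rfl, rfl⟩, b, -, rfl⟩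
  exact hN a b

section Diagonalization

open Polynomial

theorem prod_roots_toFinset_eq_of_separable {K : Type*} [Field K] [DecidableEq K] {p : K[X]}
    (hmonic : p.Monic) (hsplits : p.Splits) (hsep : p.Separable) :
    ∏ μ ∈ p.roots.toFinset, (X - C μ) = p := by
  rw [Finset.prod, Multiset.toFinset_val, (nodup_roots hsep).dedup,
    ← hsplits.eq_prod_roots_of_monic hmonic]

theorem iSup_eigenspace_eq_top_of_aeval_prod_eq_zero {K V : Type*} [Field K] [AddCommGroup V]
    [Module K V] {f : Module.End K V} {s : Finset K} (hf : aeval f (∏ μ ∈ s, (X - C μ)) = 0) :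
    ⨆ μ ∈ s, f.eigenspace μ = ⊤ := by
  classical
  obtain rfl | hs := s.eq_empty_or_nonempty
  · have : (1 : Module.End K V) = 0 := by simpa using hf
    exact eq_top_iff.2 fun v _ => by simpa using congr($this v)
  have basis_apply_mem (μ) (hμ : μ ∈ s) (v : V) :
      aeval f (Lagrange.basis s id μ) v ∈ f.eigenspace μ := by
    have hdvd : ∏ ν ∈ s, (X - C ν) ∣ (X - C μ) * Lagrange.basis s id μ := by
      rw [← Finset.mul_prod_erase s _ hμ]
      exact mul_dvd_mul_left _ (Finset.prod_dvd_prod_of_dvd _ _ fun ν _ => Dvd.intro_left _ rfl)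
    have h := aeval_eq_zero_of_dvd_aeval_eq_zero hdvd hf
    rw [Module.End.mem_eigenspace_iff, ← sub_eq_zero]
    simpa [Module.algebraMap_end_apply] using congr($h v)
  refine eq_top_iff.2 fun v _ => ?_
  have sum_basis_apply : ∑ μ ∈ s, aeval f (Lagrange.basis s id μ) v = v := by
    simpa using congr(aeval f $(Lagrange.sum_basis Function.injective_id.injOn hs) v)
  rw [← sum_basis_apply]
  exact Submodule.sum_mem _ fun μ hμ =>
    Submodule.mem_iSup_of_mem μ (Submodule.mem_iSup_of_mem hμ (basis_apply_mem μ hμ v))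

variable {F L V : Type*} [Field F] [Field L] [Algebra F L] [AddCommGroup V] [Module F V]
  [Module L V] [IsScalarTower F L V]

/-- For a second action `ρ` of `L` on the `L`-vector space `V`, commuting with the first one and
agreeing with it on `F`, the subspace of `V` on which `ρ` is the first action twisted by `φ`. -/
def twistedEigenspace (ρ : L →ₐ[F] Module.End L V) (φ : L ≃ₐ[F] L) : Submodule L V :=
  ⨅ x, (ρ x).eigenspace (φ x)

namespace twistedEigenspace

variable {ρ : L →ₐ[F] Module.End L V}

theorem mem_iff {φ : L ≃ₐ[F] L} {v : V} :
    v ∈ twistedEigenspace ρ φ ↔ ∀ x, ρ x v = φ x • v := by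
  simp [twistedEigenspace, Submodule.mem_iInf]

theorem eq_eigenspace_gen (ρ : L →ₐ[F] Module.End L V) (φ : L ≃ₐ[F] L) (pb : PowerBasis F L) :
    twistedEigenspace ρ φ = (ρ pb.gen).eigenspace (φ pb.gen) := by
  refine le_antisymm (iInf_le _ pb.gen) fun v hv => mem_iff.2 fun x => ?_
  obtain ⟨p, rfl⟩ := pb.exists_eq_aeval' x
  rw [← aeval_algHom_apply, ← aeval_map_algebraMap L (ρ pb.gen),
    Module.End.aeval_apply_of_mem_apply_eq_smul (Module.End.mem_eigenspace_iff.1 hv),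
    eval_map_algebraMap, aeval_algEquiv, AlgHom.comp_apply]
  rfl

theorem iSupIndep [FiniteDimensional F L] [Algebra.IsSeparable F L] (ρ : L →ₐ[F] Module.End L V) :
    iSupIndep (twistedEigenspace ρ) := by
  let pb := Field.powerBasisOfFiniteOfSeparable F L
  have gen_injective : Function.Injective fun φ : L ≃ₐ[F] L => φ pb.gen := fun φ ψ h =>
    AlgEquiv.coe_toAlgHom_injective (pb.algHom_ext h)
  simpa only [Function.comp_def, ← eq_eigenspace_gen] using
    (ρ pb.gen).eigenspaces_iSupIndep.comp gen_injective

theorem iSup_eq_top [FiniteDimensional F L] [IsGalois F L] (ρ : L →ₐ[F] Module.End L V) :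
    ⨆ φ, twistedEigenspace ρ φ = ⊤ := by
  classical
  let pb := Field.powerBasisOfFiniteOfSeparable F L
  let p := (minpoly F pb.gen).map (algebraMap F L)
  have prod_roots : ∏ μ ∈ p.roots.toFinset, (X - C μ) = p :=
    prod_roots_toFinset_eq_of_separable
      ((minpoly.monic (IsGalois.integral F pb.gen)).map (algebraMap F L))
      (IsGalois.splits F pb.gen) (Polynomial.Separable.map (IsGalois.separable F pb.gen))
  have aeval_gen : aeval (ρ pb.gen) p = 0 := by
    rw [aeval_map_algebraMap, aeval_algHom_apply, minpoly.aeval, map_zero]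
  rw [← prod_roots] at aeval_gen
  rw [eq_top_iff, ← iSup_eigenspace_eq_top_of_aeval_prod_eq_zero aeval_gen]
  refine iSup₂_le fun μ hμ => ?_
  obtain ⟨φ, rfl⟩ : ∃ φ : L ≃ₐ[F] L, φ pb.gen = μ := by
    refine minpoly.exists_algEquiv_of_root' (Algebra.IsAlgebraic.isAlgebraic _) ?_
    rw [Multiset.mem_toFinset] at hμ
    simpa [p] using isRoot_of_mem_roots hμ
  exact eq_eigenspace_gen ρ φ pb ▸ le_iSup (twistedEigenspace ρ) φ

end twistedEigenspace

end Diagonalization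

section Algebra

variable {F L D : Type*} [Field F] [Field L] [Algebra F L] [Ring D] [Algebra F D]
  [Module L D] [IsScalarTower F L D] [IsScalarTower L D D]

variable (F L D) in
/-- Right multiplication by the scalars of `L`, as endomorphisms of the left `L`-space `D`. -/
def mulRightScalar : L →ₐ[F] Module.End L D where
  toFun x := LinearMap.mulRight L (x • 1)
  map_one' := by ext; simp
  map_mul' x y := by ext; simp [mul_assoc, mul_comm x y, mul_smul]
  map_zero' := by ext; simp
  map_add' x y := by ext; simp [add_smul, mul_add]
  commutes' a := by ext; simp [Module.algebraMap_end_apply]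

variable (D) in
/-- The elements `d` of `D` such that `d * x = φ x * d` for every scalar `x` in `L`. -/
def twistedCentralizer (φ : L ≃ₐ[F] L) : Submodule L D :=
  twistedEigenspace (mulRightScalar F L D) φ

namespace twistedCentralizer

variable {φ ψ : L ≃ₐ[F] L} {a b d : D}

theorem mem_iff : d ∈ twistedCentralizer D φ ↔ ∀ x : L, d * (x • 1) = φ x • d :=
  twistedEigenspace.mem_iff

theorem one_mem : 1 ∈ twistedCentralizer D (1 : L ≃ₐ[F] L) :=
  mem_iff.2 fun _ => one_mul _

theorem mul_mem (ha : a ∈ twistedCentralizer D φ) (hb : b ∈ twistedCentralizer D ψ) :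
    a * b ∈ twistedCentralizer D (φ * ψ) := mem_iff.2 fun x => by
  calc a * b * (x • 1) = a * (ψ x • 1) * b := by
        rw [mul_assoc, mem_iff.1 hb, mul_assoc, smul_one_mul]
    _ = (φ * ψ) x • (a * b) := by rw [mem_iff.1 ha, smul_mul_assoc, AlgEquiv.mul_apply]

theorem inv_mem {u : Dˣ} (hu : ↑u ∈ twistedCentralizer D φ) :
    ↑u⁻¹ ∈ twistedCentralizer D φ⁻¹ := mem_iff.2 fun x => by
  have mul_eq : (u : D) * (φ⁻¹ x • 1) = x • u := by
    rw [mem_iff.1 hu]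
    exact congrArg (· • (u : D)) (φ.apply_symm_apply x)
  calc (↑u⁻¹ : D) * (x • 1) = ↑u⁻¹ * (x • u) * ↑u⁻¹ := by
        rw [mul_assoc, smul_mul_assoc, Units.mul_inv]
    _ = φ⁻¹ x • ↑u⁻¹ := by
        rw [← mul_eq, Units.inv_mul_cancel_left, smul_one_mul]

theorem le_span_singleton (hL : twistedCentralizer D (1 : L ≃ₐ[F] L) ≤ L ∙ (1 : D)) {u : Dˣ}
    (hu : ↑u ∈ twistedCentralizer D φ) : twistedCentralizer D φ ≤ L ∙ (u : D) := by
  intro d hd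
  have mul_inv_mem : d * ↑u⁻¹ ∈ twistedCentralizer D 1 :=
    mul_inv_cancel φ ▸ mul_mem hd (inv_mem hu)
  obtain ⟨x, hx⟩ := Submodule.mem_span_singleton.1 (hL mul_inv_mem)
  refine Submodule.mem_span_singleton.2 ⟨x, ?_⟩
  rw [← smul_one_mul, hx, Units.inv_mul_cancel_right]

theorem isUnit_of_mem_one (hL : twistedCentralizer D (1 : L ≃ₐ[F] L) ≤ L ∙ (1 : D))
    (hd : d ∈ twistedCentralizer D (1 : L ≃ₐ[F] L)) (hd0 : d ≠ 0) : IsUnit d := by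
  obtain ⟨x, rfl⟩ := Submodule.mem_span_singleton.1 (hL hd)
  have hx : x ≠ 0 := fun h => hd0 (by rw [h, zero_smul])
  exact ⟨⟨x • 1, x⁻¹ • 1, by rw [smul_one_mul, smul_inv_smul₀ hx],
    by rw [smul_one_mul, inv_smul_smul₀ hx]⟩, rfl⟩

section Galois

variable [FiniteDimensional F L] [IsGalois F L]

variable (F L) in
theorem induction_on {motive : D → Prop} (c : D)
    (mem : ∀ φ : L ≃ₐ[F] L, ∀ d ∈ twistedCentralizer D φ, motive d)
    (add : ∀ a b, motive a → motive b → motive (a + b)) : motive c :=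
  Submodule.iSup_induction (twistedCentralizer D) (motive := motive)
    (twistedEigenspace.iSup_eq_top (mulRightScalar F L D) ▸ Submodule.mem_top) mem
    (mem 1 0 (Submodule.zero_mem _)) add

theorem exists_mul_mul_ne_zero [IsSimpleRing D] (hd : d ∈ twistedCentralizer D φ) (hd0 : d ≠ 0) :
    ∃ α β : L ≃ₐ[F] L, α * φ * β = 1 ∧
      ∃ a ∈ twistedCentralizer D α, ∃ b ∈ twistedCentralizer D β, a * d * b ≠ 0 := by
  by_contra! h
  -- `N` would contain the two-sided ideal generated by `d`, hence `1`.
  let N : Submodule L D := ⨆ ψ : L ≃ₐ[F] L, ⨆ _ : ψ ≠ 1, twistedCentralizer D ψ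
  have mul_mul_mem (a b : D) : a * d * b ∈ N := by
    induction a using induction_on F L (D := D) with
    | add a a' ha ha' => simpa only [add_mul] using N.add_mem ha ha'
    | mem α a ha =>
      induction b using induction_on F L (D := D) with
      | add b b' hb hb' => simpa only [mul_add] using N.add_mem hb hb'
      | mem β b hb =>
        by_cases hone : α * φ * β = 1
        · exact h α β hone a ha b hb ▸ N.zero_mem
        · exact Submodule.mem_iSup_of_mem _ <|
            Submodule.mem_iSup_of_mem hone (mul_mem (mul_mem ha hd) hb)
  have one_mem_N : 1 ∈ N := one_mem_of_forall_mul_mul_mem (N := N.toAddSubgroup) hd0 mul_mul_mem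
  exact one_ne_zero <| Submodule.disjoint_def.1
    (twistedEigenspace.iSupIndep (mulRightScalar F L D) 1) 1 one_mem one_mem_N

theorem isUnit_of_ne_zero [IsSimpleRing D]
    (hL : twistedCentralizer D (1 : L ≃ₐ[F] L) ≤ L ∙ (1 : D))
    (hd : d ∈ twistedCentralizer D φ) (hd0 : d ≠ 0) : IsUnit d := by
  obtain ⟨α, β, hone, a, ha, b, hb, ne_zero⟩ := exists_mul_mul_ne_zero hd hd0
  have mul_ne_zero : d * (b * a) * d ≠ 0 := fun h => by
    have isUnit_mul : IsUnit (a * d * b) :=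
      isUnit_of_mem_one hL (hone ▸ mul_mem (mul_mem ha hd) hb) ne_zero
    refine (isUnit_mul.mul isUnit_mul).ne_zero ?_
    calc a * d * b * (a * d * b) = a * (d * (b * a) * d) * b := by noncomm_ring
      _ = 0 := by rw [h, mul_zero, zero_mul]
  have hinv : β * α * φ = 1 := by rw [mul_assoc]; exact mul_eq_one_comm.1 hone
  have isUnit_left : IsUnit (b * a * d) :=
    isUnit_of_mem_one hL (hinv ▸ mul_mem (mul_mem hb ha) hd) fun h =>
      mul_ne_zero (by rw [mul_assoc, h, mul_zero])
  have isUnit_right : IsUnit (d * (b * a)) :=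
    isUnit_of_mem_one hL (mul_eq_one_comm.1 hinv ▸ mul_mem hd (mul_mem hb ha)) fun h =>
      mul_ne_zero (by rw [h, zero_mul])
  obtain ⟨r, hr⟩ := isUnit_right.exists_right_inv
  obtain ⟨l, hl⟩ := isUnit_left.exists_left_inv
  exact isUnit_iff_exists_and_exists.2
    ⟨⟨b * a * r, by rwa [← mul_assoc]⟩, ⟨l * (b * a), by rwa [mul_assoc]⟩⟩

end Galois

/-- The automorphisms of `L / F` induced by conjugation by units of `D`. -/
def innerSubgroup (F L D : Type*) [Field F] [Field L] [Algebra F L] [Ring D] [Algebra F D]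
    [Module L D] [IsScalarTower F L D] [IsScalarTower L D D] : Subgroup (L ≃ₐ[F] L) where
  carrier := {φ | ∃ u : Dˣ, ↑u ∈ twistedCentralizer D φ}
  one_mem' := ⟨1, one_mem⟩
  mul_mem' := fun ⟨u, hu⟩ ⟨v, hv⟩ => ⟨u * v, mul_mem hu hv⟩
  inv_mem' := fun ⟨u, hu⟩ => ⟨u⁻¹, inv_mem hu⟩

section Galois

variable [FiniteDimensional F L] [IsGalois F L]

theorem fixedField_innerSubgroup [IsSimpleRing D] [Algebra.IsCentral F D]
    (hL : twistedCentralizer D (1 : L ≃ₐ[F] L) ≤ L ∙ (1 : D)) :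
    IntermediateField.fixedField (innerSubgroup F L D) = ⊥ := by
  refine eq_bot_iff.2 fun x hx => ?_
  rw [IntermediateField.mem_fixedField_iff] at hx
  have smul_one_mem_center : x • (1 : D) ∈ Subalgebra.center F D := by
    refine Subalgebra.mem_center_iff.2 fun d => ?_
    induction d using induction_on F L (D := D) with
    | add a b ha hb => rw [add_mul, mul_add, ha, hb]
    | mem φ d hd =>
      obtain rfl | hd0 := eq_or_ne d 0
      · rw [zero_mul, mul_zero]
      · obtain ⟨u, rfl⟩ := isUnit_of_ne_zero hL hd hd0
        rw [mem_iff.1 hd, hx φ ⟨u, hd⟩, smul_one_mul]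
  obtain ⟨a, ha⟩ := Algebra.mem_bot.1 (Algebra.IsCentral.out smul_one_mem_center)
  refine IntermediateField.mem_bot.2 ⟨a, smul_left_injective L (one_ne_zero (α := D)) ?_⟩
  calc algebraMap F L a • (1 : D) = algebraMap F D a := by
        rw [algebraMap_smul, Algebra.algebraMap_eq_smul_one]
    _ = x • 1 := ha

theorem innerSubgroup_eq_top [IsSimpleRing D] [Algebra.IsCentral F D]
    (hL : twistedCentralizer D (1 : L ≃ₐ[F] L) ≤ L ∙ (1 : D)) : innerSubgroup F L D = ⊤ := by
  rw [← IntermediateField.fixingSubgroup_fixedField (innerSubgroup F L D),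
    fixedField_innerSubgroup hL, IntermediateField.fixingSubgroup_bot]

theorem exists_units [IsSimpleRing D] [Algebra.IsCentral F D]
    (hL : twistedCentralizer D (1 : L ≃ₐ[F] L) ≤ L ∙ (1 : D)) :
    ∃ e : (L ≃ₐ[F] L) → Dˣ, e 1 = 1 ∧ ∀ φ, ↑(e φ) ∈ twistedCentralizer D φ := by
  have mem (φ : L ≃ₐ[F] L) : φ ∈ innerSubgroup F L D :=
    innerSubgroup_eq_top (D := D) hL ▸ Subgroup.mem_top φ
  classical
  choose u hu using mem
  refine ⟨Function.update u 1 1, Function.update_self .., fun φ => ?_⟩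
  obtain rfl | hφ := eq_or_ne φ 1
  · rw [Function.update_self]
    exact one_mem
  · simpa only [Function.update_of_ne hφ] using hu φ

end Galois

section Units

variable {e : (L ≃ₐ[F] L) → Dˣ}

theorem linearIndependent [Nontrivial D] [FiniteDimensional F L] [Algebra.IsSeparable F L]
    (he : ∀ φ, ↑(e φ) ∈ twistedCentralizer D φ) : LinearIndependent L fun φ => (e φ : D) :=
  (twistedEigenspace.iSupIndep (mulRightScalar F L D)).linearIndependent _ he
    fun φ => (e φ).ne_zero

theorem span_range_eq_top [FiniteDimensional F L] [IsGalois F L]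
    (hL : twistedCentralizer D (1 : L ≃ₐ[F] L) ≤ L ∙ (1 : D))
    (he : ∀ φ, ↑(e φ) ∈ twistedCentralizer D φ) :
    Submodule.span L (Set.range fun φ => (e φ : D)) = ⊤ := by
  rw [eq_top_iff, ← twistedEigenspace.iSup_eq_top (mulRightScalar F L D),
    Submodule.span_range_eq_iSup]
  exact iSup_mono fun φ => le_span_singleton hL (he φ)

theorem exists_mul_eq_smul [Nontrivial D]
    (hL : twistedCentralizer D (1 : L ≃ₐ[F] L) ≤ L ∙ (1 : D))
    (he : ∀ φ, ↑(e φ) ∈ twistedCentralizer D φ) (φ ψ : L ≃ₐ[F] L) :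
    ∃ a : Lˣ, (e φ * e ψ : D) = (a : L) • (e (φ * ψ) : D) := by
  obtain ⟨a, ha⟩ := Submodule.mem_span_singleton.1
    (le_span_singleton hL (he (φ * ψ)) (mul_mem (he φ) (he ψ)))
  have ha0 : a ≠ 0 := by
    rintro rfl
    exact (e φ * e ψ).ne_zero (by rw [Units.val_mul, ← ha, zero_smul])
  exact ⟨Units.mk0 a ha0, ha.symm⟩

theorem cocycle_identity [Nontrivial D] (he : ∀ φ, ↑(e φ) ∈ twistedCentralizer D φ)
    {μ : (L ≃ₐ[F] L) → (L ≃ₐ[F] L) → L} (hμ : ∀ φ ψ, (e φ * e ψ : D) = μ φ ψ • (e (φ * ψ) : D))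
    (φ₁ φ₂ φ₃ : L ≃ₐ[F] L) :
    φ₁ (μ φ₂ φ₃) * μ φ₁ (φ₂ * φ₃) = μ φ₁ φ₂ * μ (φ₁ * φ₂) φ₃ := by
  refine smul_left_injective L (e (φ₁ * φ₂ * φ₃)).ne_zero ?_
  calc (φ₁ (μ φ₂ φ₃) * μ φ₁ (φ₂ * φ₃)) • (e (φ₁ * φ₂ * φ₃) : D)
      = φ₁ (μ φ₂ φ₃) • (e φ₁ * e (φ₂ * φ₃) : D) := by rw [hμ, mul_smul, mul_assoc φ₁]
    _ = e φ₁ * (e φ₂ * e φ₃ : D) := by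
        rw [hμ φ₂, ← smul_mul_assoc, ← mem_iff.1 (he φ₁), mul_assoc, smul_one_mul]
    _ = (μ φ₁ φ₂ * μ (φ₁ * φ₂) φ₃) • (e (φ₁ * φ₂ * φ₃) : D) := by
        rw [← mul_assoc, hμ φ₁, smul_mul_assoc, hμ, smul_smul]

end Units

end twistedCentralizer

end Algebra

theorem stmt_4_general (F : Type*) [Field F] (D : Type*) [Ring D] [IsSimpleRing D] [Algebra F D]
    [Algebra.IsCentral F D]
    (L : Type*) [Field L] [Algebra F L] [FiniteDimensional F L] [IsGalois F L]
    (ι : L →ₐ[F] D)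
    (hmax : ∀ d : D, (∀ x : L, d * ι x = ι x * d) → d ∈ ι.range) :
    letI : Module L D := Module.compHom D ι.toRingHom
    ∃ e : (L ≃ₐ[F] L) → Dˣ,
      e 1 = 1 ∧
      LinearIndependent L (fun φ : L ≃ₐ[F] L => (e φ : D)) ∧
      Submodule.span L (Set.range fun φ : L ≃ₐ[F] L => (e φ : D)) = ⊤ ∧
      (∀ (φ : L ≃ₐ[F] L) (x : L), (e φ : D) * ι x = ι (φ x) * (e φ : D)) ∧
      ∃ μ : (L ≃ₐ[F] L) → (L ≃ₐ[F] L) → Lˣ,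
        (∀ φ₁ φ₂ : L ≃ₐ[F] L, (e φ₁ : D) * (e φ₂ : D) = ι (μ φ₁ φ₂) * (e (φ₁ * φ₂) : D)) ∧
        ∀ φ₁ φ₂ φ₃ : L ≃ₐ[F] L,
          φ₁ ((μ φ₂ φ₃ : L)) * (μ φ₁ (φ₂ * φ₃) : L) = (μ φ₁ φ₂ : L) * (μ (φ₁ * φ₂) φ₃ : L) := by
  let : Module L D := Module.compHom D ι.toRingHom
  have smul_def (x : L) (d : D) : x • d = ι x * d := rfl
  have : IsScalarTower L D D := ⟨fun x a b => mul_assoc (ι x) a b⟩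
  have : IsScalarTower F L D := ⟨fun a x d => by
    rw [smul_def, smul_def, map_smul, smul_mul_assoc]⟩
  have mem_iff {φ : L ≃ₐ[F] L} {d : D} :
      d ∈ twistedCentralizer D φ ↔ ∀ x, d * ι x = ι (φ x) * d := by
    simp only [twistedCentralizer.mem_iff, smul_def, mul_one]
  have hL : twistedCentralizer D (1 : L ≃ₐ[F] L) ≤ L ∙ (1 : D) := fun d hd => by
    obtain ⟨x, rfl⟩ := hmax d (mem_iff.1 hd)
    exact Submodule.mem_span_singleton.2 ⟨x, mul_one _⟩
  obtain ⟨e, e_one, he⟩ := twistedCentralizer.exists_units hL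
  choose μ hμ using twistedCentralizer.exists_mul_eq_smul hL he
  exact ⟨e, e_one, twistedCentralizer.linearIndependent he,
    twistedCentralizer.span_range_eq_top hL he, fun φ => mem_iff.1 (he φ), μ, hμ,
    twistedCentralizer.cocycle_identity he hμ⟩

/-- Crossed-product description of a finite-dimensional central division algebra `D` over a
field `F` with a Galois maximal commutative subfield `L` (given by an embedding
`ι : L →ₐ[F] D` whose image is maximal commutative): there exist units `e φ ∈ Dˣ`, one for
each `φ ∈ Gal(L/F)`, with `e id = 1`, forming a left `L`-basis of `D` (for the module
structure `x • d = ι x * d`), satisfying `e φ * ι x = ι (φ x) * e φ`, and multiplying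
according to a `2`-cocycle `μ` with values in `Lˣ`. -/
theorem stmt_4 (F : Type*) [Field F] (D : Type*) [DivisionRing D] [Algebra F D]
    [FiniteDimensional F D]
    (hcenter : Subalgebra.center F D = ⊥)
    (L : Type*) [Field L] [Algebra F L] [IsGalois F L]
    (ι : L →ₐ[F] D)
    (hmax : ∀ d : D, (∀ x : L, d * ι x = ι x * d) → d ∈ ι.range) :
    letI : Module L D := Module.compHom D ι.toRingHom
    ∃ e : (L ≃ₐ[F] L) → Dˣ,
      e 1 = 1 ∧
      LinearIndependent L (fun φ : L ≃ₐ[F] L => (e φ : D)) ∧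
      Submodule.span L (Set.range fun φ : L ≃ₐ[F] L => (e φ : D)) = ⊤ ∧
      (∀ (φ : L ≃ₐ[F] L) (x : L), (e φ : D) * ι x = ι (φ x) * (e φ : D)) ∧
      ∃ μ : (L ≃ₐ[F] L) → (L ≃ₐ[F] L) → Lˣ,
        (∀ φ₁ φ₂ : L ≃ₐ[F] L, (e φ₁ : D) * (e φ₂ : D) = ι (μ φ₁ φ₂) * (e (φ₁ * φ₂) : D)) ∧
        ∀ φ₁ φ₂ φ₃ : L ≃ₐ[F] L,
          φ₁ ((μ φ₂ φ₃ : L)) * (μ φ₁ (φ₂ * φ₃) : L) = (μ φ₁ φ₂ : L) * (μ (φ₁ * φ₂) φ₃ : L) := by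
  have : Algebra.IsCentral F D := ⟨hcenter.le⟩
  have : FiniteDimensional F L := FiniteDimensional.of_injective ι.toLinearMap ι.injective
  exact stmt_4_general F D L ι hmax
end

section
/- For every integer n ≥ 2 there is an isomorphism of real representations of the cyclic group C_{2^n}: (⊕_{ℓ=0}^{2^(n-2)−1} M_{1−5^ℓ}) ⊕ (⊕_{ℓ=0}^{2^(n-2)−1} M_{1+5^ℓ}) ⊕ (M_1)^{⊕ 2^(n-1)} ≅ (ℝ[C_{2^n}])^{⊕ 2^(n-1)}, where ℝ[C_{2^n}] denotes the real regular representation of C_{2^n} (the group algebra with C_{2^n} acting by left multiplication). Both sides have real dimension 2^(2n−1). -/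
open Polynomial

/-- `An n = ℝ[x]/(x^(2^(n-1)) + 1)`. -/
noncomputable abbrev An (n : ℕ) : Type :=
  ℝ[X] ⧸ Ideal.span {(X : ℝ[X]) ^ 2 ^ (n - 1) + 1}

/-- The image of `x` in `An n`, as a unit (its inverse is `-x^(2^(n-1)-1)`);
it has multiplicative order `2^n`.  For `c : ℤ`, the representation `M c` of the
cyclic group `C_{2^n} = ⟨γ⟩` is `An n` with `γ` acting by multiplication by `(xu n)^c`. -/
noncomputable def xu (n : ℕ) : (An n)ˣ :=
  Units.mkOfMulEqOne (Ideal.Quotient.mk _ X)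
    (-(Ideal.Quotient.mk (Ideal.span {(X : ℝ[X]) ^ 2 ^ (n - 1) + 1}) X) ^ (2 ^ (n - 1) - 1))
    (by
      have h0 : (Ideal.Quotient.mk (Ideal.span {(X : ℝ[X]) ^ 2 ^ (n - 1) + 1})
          ((X : ℝ[X]) ^ 2 ^ (n - 1) + 1)) = 0 :=
        Ideal.Quotient.eq_zero_iff_mem.mpr (Ideal.subset_span (Set.mem_singleton _))
      have hx : (Ideal.Quotient.mk (Ideal.span {(X : ℝ[X]) ^ 2 ^ (n - 1) + 1}) X) ^ 2 ^ (n - 1)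
          = -1 := by
        rw [map_add, map_pow, map_one] at h0
        linear_combination h0
      have h1 : 1 ≤ 2 ^ (n - 1) := Nat.one_le_two_pow
      calc Ideal.Quotient.mk _ X *
            (-(Ideal.Quotient.mk (Ideal.span {(X : ℝ[X]) ^ 2 ^ (n - 1) + 1}) X) ^ (2 ^ (n - 1) - 1))
          = -((Ideal.Quotient.mk (Ideal.span {(X : ℝ[X]) ^ 2 ^ (n - 1) + 1}) X) ^ (2 ^ (n - 1) - 1 + 1)) := by
            ring
        _ = 1 := by rw [Nat.sub_add_cancel h1, hx]; ring)


/-! A root `x` of `X ^ 2 ^ m + 1` gives a character `c ↦ x ^ c` of `ZMod (2 ^ (m + 1))` with values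
in `A = R[x]`, all of whose nontrivial twists sum to zero. The resulting Fourier transform
diagonalises translation, so `A[C]` is the sum of all the `M_c`, each occurring once; expanding `A`
in powers of `x` turns `A[C]` into `2 ^ m` copies of `R[C]`. On the other side, every odd residue is
a unit `u`, and `x ↦ x ^ u` is an automorphism of `A` carrying `M_1` to `M_u`, while every unit is
`± 5 ^ ℓ`, so that the `1 ± 5 ^ ℓ` exhaust the even residues. -/

section CharacterSums

theorem addChar_sum_eq_zero_of_isLeftRegular {G A : Type*} [AddGroup G] [Fintype G] [Ring A]
    (ψ : AddChar G A) {g : G} (hg : IsLeftRegular (ψ g - 1)) : ∑ d, ψ d = 0 := by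
  have translate : ψ g * ∑ d, ψ d = ∑ d, ψ d := by
    rw [Finset.mul_sum]
    exact Fintype.sum_equiv (Equiv.addLeft g) _ _ fun d => (ψ.map_add_eq_mul g d).symm
  apply hg
  simp only [sub_mul, translate, one_mul, sub_self, mul_zero]

theorem exists_mul_eq_prime_pow {p m : ℕ} [Fact p.Prime] {k : ZMod (p ^ (m + 1))} (hk : k ≠ 0) :
    ∃ l, k * l = (p : ZMod (p ^ (m + 1))) ^ m := by
  obtain ⟨a, ha, hgcd⟩ := (Nat.dvd_prime_pow Fact.out).mp (Nat.gcd_dvd_right k.val (p ^ (m + 1)))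
  have ham : a ≤ m := by
    refine Nat.le_of_lt_succ (ha.lt_of_ne fun h => hk ((ZMod.val_eq_zero k).mp ?_))
    refine Nat.eq_zero_of_dvd_of_lt (Nat.gcd_eq_right_iff_dvd.mp ?_) k.val_lt
    rw [hgcd, h]
  refine ⟨k⁻¹ * p ^ (m - a), ?_⟩
  rw [← mul_assoc, ZMod.mul_inv_eq_gcd, hgcd, Nat.cast_pow, ← pow_add, Nat.add_sub_cancel' ham]

theorem sum_mulShift_eq_zero {A : Type*} [CommRing A] {p m : ℕ} [Fact p.Prime]
    (ψ : AddChar (ZMod (p ^ (m + 1))) A)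
    (hψ : IsLeftRegular (ψ ((p : ZMod (p ^ (m + 1))) ^ m) - 1)) {k : ZMod (p ^ (m + 1))}
    (hk : k ≠ 0) : ∑ d, ψ.mulShift k d = 0 := by
  obtain ⟨l, hl⟩ := exists_mul_eq_prime_pow hk
  refine addChar_sum_eq_zero_of_isLeftRegular _ (g := l) ?_
  rwa [AddChar.mulShift_apply, hl]

theorem addChar_intCast_eq_zpow {S A : Type*} [Ring S] [Monoid A] (ψ : AddChar S A) {x : Aˣ}
    (hx : x = ψ 1) (c : ℤ) : ψ c = (x ^ c : Aˣ) := by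
  have hunit : x = ψ.toMonoidHom.toHomUnits (Multiplicative.ofAdd 1) := Units.ext hx
  rw [hunit, ← map_zpow, ← ofAdd_zsmul, zsmul_one]
  rfl

end CharacterSums

section Fourier

variable {S A : Type*} [CommRing S] [Fintype S] [CommRing A]

/-- The matrix `ψ (k d)` of the Fourier transform on functions `S → A` attached to an additive
character `ψ` of a finite ring `S`. -/
def addCharMatrix (ψ : AddChar S A) : Matrix S S A :=
  .of fun k d => ψ (k * d)

theorem addCharMatrix_mulVec_mulShift_mul (ψ : AddChar S A) (a : S) (v : S → A) (k : S) :
    (addCharMatrix ψ).mulVec (fun d => ψ (a * d) * v d) k = (addCharMatrix ψ).mulVec v (k + a) := by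
  simp only [Matrix.mulVec, dotProduct, addCharMatrix, Matrix.of_apply, add_mul,
    AddChar.map_add_eq_mul, mul_assoc]

variable [DecidableEq S] {ψ : AddChar S A}

theorem addCharMatrix_inv_mul_addCharMatrix (hψ : ∀ k ≠ 0, ∑ d, ψ.mulShift k d = 0) :
    addCharMatrix ψ⁻¹ * addCharMatrix ψ = (Fintype.card S : A) • 1 := by
  ext i j
  have hsum : (addCharMatrix ψ⁻¹ * addCharMatrix ψ) i j = ∑ d, ψ.mulShift (j - i) d := by
    refine Finset.sum_congr rfl fun d _ => ?_
    simp only [addCharMatrix, Matrix.of_apply, AddChar.inv_apply, AddChar.mulShift_apply,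
      ← AddChar.map_add_eq_mul]
    congr 1
    ring
  obtain rfl | hij := eq_or_ne i j
  · simp [hsum]
  · rw [hsum, hψ _ (sub_ne_zero.mpr hij.symm), Matrix.smul_apply, Matrix.one_apply_ne hij,
      smul_zero]

/-- The Fourier transform `v ↦ ∑ d, ψ (- k d) v d`, whose kernel is `ψ⁻¹` so that it turns
multiplication by `ψ` into translation by `1`. -/
noncomputable def fourierEquiv (hψ : ∀ k ≠ 0, ∑ d, ψ.mulShift k d = 0)
    (hcard : IsUnit (Fintype.card S : A)) : (S → A) ≃ₗ[A] (S → A) :=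
  have inv_mul : addCharMatrix ψ⁻¹ * ((↑hcard.unit⁻¹ : A) • addCharMatrix ψ) = 1 := by
    rw [mul_smul_comm, addCharMatrix_inv_mul_addCharMatrix hψ, smul_smul, hcard.val_inv_mul,
      one_smul]
  Matrix.toLin'OfInv (mul_eq_one_comm.mp inv_mul) inv_mul

theorem fourierEquiv_mul (hψ : ∀ k ≠ 0, ∑ d, ψ.mulShift k d = 0)
    (hcard : IsUnit (Fintype.card S : A)) (a : S) (v : S → A) (k : S) :
    fourierEquiv hψ hcard (fun d => ψ (a * d) * v d) k = fourierEquiv hψ hcard v (k - a) := by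
  have h := addCharMatrix_mulVec_mulShift_mul ψ⁻¹ (-a) v k
  simp only [AddChar.inv_apply, neg_mul, neg_neg, ← sub_eq_add_neg] at h
  exact h

end Fourier

section GroupAlgebra

variable {R A G ι : Type*} [CommSemiring R] [AddCommMonoid A] [Module R A] [Finite G] [Finite ι]

/-- Coordinates with respect to a basis of `A` identify functions `G → A` with a sum of copies of
the group algebra of `G`. -/
noncomputable def piMonoidAlgebraEquiv (b : Module.Basis ι R A) :
    (G → A) ≃ₗ[R] (ι → MonoidAlgebra R G) :=
  LinearEquiv.piCongrRight (fun _ => b.equivFun) ≪≫ₗ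
    (Equiv.piComm fun _ _ => R).toLinearEquiv ⟨fun _ _ => rfl, fun _ _ => rfl⟩ ≪≫ₗ
    LinearEquiv.piCongrRight fun _ => (MonoidAlgebra.basis G R).equivFun.symm

theorem coeff_piMonoidAlgebraEquiv (b : Module.Basis ι R A) (v : G → A) (i : ι) (g : G) :
    (piMonoidAlgebraEquiv b v i).coeff g = b.equivFun (v g) i :=
  rfl

theorem piMonoidAlgebraEquiv_translate [Group G] (b : Module.Basis ι R A) (g : G) (v : G → A) :
    piMonoidAlgebraEquiv b (fun k => v (g⁻¹ * k)) =
      fun i => MonoidAlgebra.single g 1 * piMonoidAlgebraEquiv b v i := by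
  ext i k
  rw [MonoidAlgebra.coeff_single_mul_apply, one_mul, coeff_piMonoidAlgebraEquiv,
    coeff_piMonoidAlgebraEquiv]

end GroupAlgebra

section NegOneRoot

variable {R A : Type*} [CommRing R] [CommRing A] [Algebra R A] {m : ℕ}
  (h : IsAdjoinRoot A (X ^ 2 ^ m + 1 : R[X]))

include h in
theorem root_pow_two_pow : h.root ^ 2 ^ m = -1 :=
  eq_neg_of_add_eq_zero_left <| by
    simpa only [map_add, map_pow, aeval_X, map_one] using h.aeval_root_self

include h in
theorem root_pow_two_pow_succ : h.root ^ 2 ^ (m + 1) = 1 := by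
  rw [pow_succ, pow_mul, root_pow_two_pow, neg_one_sq]

/-- The basis `1, x, …, x ^ (2 ^ m - 1)` of `R[x]`, where `x ^ 2 ^ m = -1`. -/
noncomputable def rootPowBasis [Nontrivial R] : Module.Basis (Fin (2 ^ m)) R A :=
  let hmonic : IsAdjoinRootMonic A (X ^ 2 ^ m + 1 : R[X]) :=
    { h with monic := monic_X_pow_add_C (1 : R) (pow_ne_zero m two_ne_zero) }
  hmonic.basis.reindex (finCongr (natDegree_X_pow_add_C (r := (1 : R))))

/-- The character `c ↦ x ^ c` of `ZMod (2 ^ (m + 1))`, where `x ^ 2 ^ m = -1`. -/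
noncomputable def rootChar : AddChar (ZMod (2 ^ (m + 1))) A :=
  AddChar.zmodChar (2 ^ (m + 1)) (root_pow_two_pow_succ h)

theorem rootChar_apply (c : ZMod (2 ^ (m + 1))) : rootChar h c = h.root ^ c.val :=
  AddChar.zmodChar_apply _ c

theorem rootChar_natCast (c : ℕ) : rootChar h c = h.root ^ c :=
  AddChar.zmodChar_apply' _ c

theorem rootChar_one : rootChar h 1 = h.root := by
  simpa using rootChar_natCast h 1

theorem rootChar_intCast {x : Aˣ} (hx : x = h.root) (c : ℤ) : rootChar h c = (x ^ c : Aˣ) :=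
  addChar_intCast_eq_zpow _ (hx.trans (rootChar_one h).symm) c

theorem sum_rootChar_mulShift_eq_zero (h2 : IsUnit (2 : A)) {k : ZMod (2 ^ (m + 1))} (hk : k ≠ 0) :
    ∑ d, (rootChar h).mulShift k d = 0 := by
  refine sum_mulShift_eq_zero _ (IsUnit.isRegular ?_).left hk
  have hval : rootChar h (((2 : ℕ) : ZMod (2 ^ (m + 1))) ^ m) - 1 = -2 := by
    rw [← Nat.cast_pow, rootChar_natCast, root_pow_two_pow]
    ring
  exact hval ▸ h2.neg

theorem rootChar_unit_pow_two_pow (u : (ZMod (2 ^ (m + 1)))ˣ) : rootChar h u ^ 2 ^ m = -1 := by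
  have hodd : Odd (u : ZMod (2 ^ (m + 1))).val :=
    Nat.coprime_two_right.mp <| (ZMod.val_coe_unit_coprime u).coprime_dvd_right <|
      dvd_pow_self 2 m.succ_ne_zero
  rw [rootChar_apply, pow_right_comm, root_pow_two_pow, hodd.neg_one_pow]

/-- The endomorphism `x ↦ x ^ u` of `R[x]`, where `x ^ 2 ^ m = -1` and `u` is a residue prime
to `2`. -/
noncomputable def rootPowHom (u : (ZMod (2 ^ (m + 1)))ˣ) : A →ₐ[R] A :=
  h.liftHom (rootChar h u) (by simp [rootChar_unit_pow_two_pow])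

theorem rootPowHom_root (u : (ZMod (2 ^ (m + 1)))ˣ) : rootPowHom h u h.root = rootChar h u :=
  h.liftHom_root _

theorem rootPowHom_rootChar (u : (ZMod (2 ^ (m + 1)))ˣ) (c : ZMod (2 ^ (m + 1))) :
    rootPowHom h u (rootChar h c) = rootChar h (u * c) := by
  rw [rootChar_apply, map_pow, rootPowHom_root, ← AddChar.map_nsmul_eq_pow,
    nsmul_eq_mul, ZMod.natCast_zmod_val, mul_comm]

theorem rootPowHom_comp (u w : (ZMod (2 ^ (m + 1)))ˣ) :
    (rootPowHom h u).comp (rootPowHom h w) = rootPowHom h (u * w) :=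
  h.eq_liftHom _ _ (by simp [rootPowHom_root, rootPowHom_rootChar])

theorem rootPowHom_one : rootPowHom h 1 = AlgHom.id R A :=
  (h.eq_liftHom _ _ (by simp [rootChar_one])).symm

/-- The automorphism `x ↦ x ^ u` of `R[x]`, with inverse `x ↦ x ^ u⁻¹`. -/
noncomputable def rootPowEquiv (u : (ZMod (2 ^ (m + 1)))ˣ) : A ≃ₐ[R] A :=
  AlgEquiv.ofAlgHom (rootPowHom h u) (rootPowHom h u⁻¹)
    (by rw [rootPowHom_comp, mul_inv_cancel, rootPowHom_one])
    (by rw [rootPowHom_comp, inv_mul_cancel, rootPowHom_one])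

/-- The Fourier transform attached to `rootChar h`, with scalars restricted to `R`. -/
noncomputable def rootFourierEquiv (h2 : IsUnit (2 : R)) :
    (ZMod (2 ^ (m + 1)) → A) ≃ₗ[R] (ZMod (2 ^ (m + 1)) → A) :=
  have h2A : IsUnit (2 : A) := map_ofNat (algebraMap R A) 2 ▸ h2.map (algebraMap R A)
  have hcard : IsUnit (Fintype.card (ZMod (2 ^ (m + 1))) : A) := by
    simpa [ZMod.card] using h2A.pow (m + 1)
  (fourierEquiv (fun _ => sum_rootChar_mulShift_eq_zero h h2A) hcard).restrictScalars R

theorem rootFourierEquiv_mul (h2 : IsUnit (2 : R)) (v : ZMod (2 ^ (m + 1)) → A)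
    (k : ZMod (2 ^ (m + 1))) :
    rootFourierEquiv h h2 (fun c => rootChar h c * v c) k = rootFourierEquiv h h2 v (k - 1) := by
  simp only [rootFourierEquiv, LinearEquiv.restrictScalars_apply]
  simpa only [one_mul] using fourierEquiv_mul _ _ 1 v k

/-- The sum of the `M_c` over all `c : ZMod (2 ^ (m + 1))`, as a sum of `2 ^ m` copies of the group
algebra. -/
noncomputable def twistsEquiv [Nontrivial R] (h2 : IsUnit (2 : R)) :
    (ZMod (2 ^ (m + 1)) → A) ≃ₗ[R]
      (Fin (2 ^ m) → MonoidAlgebra R (Multiplicative (ZMod (2 ^ (m + 1))))) :=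
  rootFourierEquiv h h2 ≪≫ₗ LinearEquiv.funCongrLeft R A Multiplicative.toAdd ≪≫ₗ
    piMonoidAlgebraEquiv (rootPowBasis h)

theorem twistsEquiv_mul [Nontrivial R] (h2 : IsUnit (2 : R)) (v : ZMod (2 ^ (m + 1)) → A) :
    twistsEquiv h h2 (fun c => rootChar h c * v c) =
      fun i => MonoidAlgebra.single (Multiplicative.ofAdd 1) 1 * twistsEquiv h h2 v i := by
  simp only [twistsEquiv, LinearEquiv.trans_apply]
  rw [← piMonoidAlgebraEquiv_translate]
  refine congrArg _ (funext fun k => ?_)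
  rw [LinearEquiv.funCongrLeft_apply, LinearMap.funLeft_apply, rootFourierEquiv_mul,
    sub_eq_neg_add]
  rfl

end NegOneRoot

section BlockExponents

/-- The exponents `1 - 5 ^ ℓ` and `1 + 5 ^ ℓ`, followed by the odd residues modulo `2 ^ (m + 2)`. -/
def blockExponent (m : ℕ) :
    Fin (2 ^ m) ⊕ Fin (2 ^ m) ⊕ Fin (2 ^ (m + 1)) → ZMod (2 ^ (m + 2)) :=
  Sum.elim (fun ℓ => 1 - 5 ^ (ℓ : ℕ))
    (Sum.elim (fun ℓ => 1 + 5 ^ (ℓ : ℕ)) fun i => 2 * (i : ℕ) + 1)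

theorem five_pow_injective (m : ℕ) :
    Function.Injective fun ℓ : Fin (2 ^ m) => (5 : ZMod (2 ^ (m + 2))) ^ (ℓ : ℕ) := by
  intro a b hab
  refine Fin.ext (pow_injOn_Iio_orderOf ?_ ?_ hab) <;> simp [ZMod.orderOf_five]

theorem two_mul_add_one_injective (m : ℕ) :
    Function.Injective fun i : Fin (2 ^ m) => (2 * (i : ℕ) + 1 : ZMod (2 ^ (m + 1))) := by
  intro i j hij
  have hlt (k : Fin (2 ^ m)) : 2 * (k : ℕ) + 1 < 2 ^ (m + 1) := by
    have := k.isLt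
    omega
  have := CharP.natCast_injOn_Iio (ZMod (2 ^ (m + 1))) (2 ^ (m + 1)) (hlt i) (hlt j)
    (by exact_mod_cast hij)
  omega

theorem blockExponent_injective (m : ℕ) : Function.Injective (blockExponent m) := by
  let mod4 := ZMod.castHom (show 4 ∣ 2 ^ (m + 2) from ⟨2 ^ m, by ring⟩) (ZMod 4)
  have mod4_five : mod4 5 = 1 := by rw [map_ofNat]; rfl
  have mod4_two : mod4 2 = 2 := map_ofNat _ _
  have even_ne_odd : (∀ i : ZMod 4, 0 ≠ 2 * i + 1) ∧ ∀ i : ZMod 4, 2 ≠ 2 * i + 1 := by decide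
  refine (sub_right_injective.comp (five_pow_injective m)).sumElim
    (((add_right_injective 1).comp (five_pow_injective m)).sumElim
      (two_mul_add_one_injective (m + 1)) fun ℓ i hi => ?_) ?_
  · refine even_ne_odd.2 (i : ℕ) ?_
    simpa [mod4_two, mod4_five, one_add_one_eq_two] using congrArg mod4 hi
  · rintro ℓ (ℓ' | i) hi
    · have : (0 : ZMod 4) = 1 + 1 := by simpa [mod4_five] using congrArg mod4 hi
      exact absurd this (by decide)
    · refine even_ne_odd.1 (i : ℕ) ?_
      simpa [mod4_two, mod4_five] using congrArg mod4 hi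

theorem blockExponent_bijective (m : ℕ) : Function.Bijective (blockExponent m) := by
  refine (Fintype.bijective_iff_injective_and_card _).mpr ⟨blockExponent_injective m, ?_⟩
  simp only [Fintype.card_sum, Fintype.card_fin, ZMod.card]
  ring

end BlockExponents

section Blocks

variable {R A : Type*} [CommRing R] [CommRing A] [Algebra R A] {m : ℕ}
  (h : IsAdjoinRoot A (X ^ 2 ^ (m + 1) + 1 : R[X]))

/-- The residue `2 i + 1` as a unit modulo `2 ^ k`. -/
def oddUnit (k i : ℕ) : (ZMod (2 ^ k))ˣ :=
  ZMod.unitOfCoprime (2 * i + 1) ((odd_two_mul_add_one i).coprime_two_right.pow_right k)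

/-- The summands `M_{1 - 5 ^ ℓ}`, `M_{1 + 5 ^ ℓ}` and `M_1`, reindexed by `c : ZMod (2 ^ (m + 2))`
so that the generator acts on the summand `c` as `x ^ c`: the copies of `M_1` are first
carried to the `M_u` for odd `u`. -/
noncomputable def blocksEquiv :
    ((Fin (2 ^ m) → A) × (Fin (2 ^ m) → A) × (Fin (2 ^ (m + 1)) → A)) ≃ₗ[R]
      (ZMod (2 ^ (m + 2)) → A) :=
  ((LinearEquiv.refl R _).prodCongr
      (((LinearEquiv.refl R _).prodCongr (LinearEquiv.piCongrRight fun i : Fin (2 ^ (m + 1)) =>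
          (rootPowEquiv h (oddUnit _ i)).toLinearEquiv)) ≪≫ₗ
        (LinearEquiv.sumArrowLequivProdArrow _ _ R A).symm)) ≪≫ₗ
    (LinearEquiv.sumArrowLequivProdArrow _ _ R A).symm ≪≫ₗ
    LinearEquiv.funCongrLeft R A (Equiv.ofBijective _ (blockExponent_bijective m)).symm

theorem blocksEquiv_apply_blockExponent
    (v : (Fin (2 ^ m) → A) × (Fin (2 ^ m) → A) × (Fin (2 ^ (m + 1)) → A))
    (s : Fin (2 ^ m) ⊕ Fin (2 ^ m) ⊕ Fin (2 ^ (m + 1))) :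
    blocksEquiv h v (blockExponent m s) =
      Sum.elim v.1 (Sum.elim v.2.1 fun i : Fin (2 ^ (m + 1)) =>
        rootPowEquiv h (oddUnit _ i) (v.2.2 i)) s := by
  have hs : (Equiv.ofBijective _ (blockExponent_bijective m)).symm (blockExponent m s) = s :=
    Equiv.ofBijective_symm_apply_apply _ _ s
  simp only [blocksEquiv, LinearEquiv.trans_apply, LinearEquiv.funCongrLeft_apply,
    LinearMap.funLeft_apply, hs]
  rfl

theorem blocksEquiv_mul {x : Aˣ} (hx : x = h.root)
    (v : (Fin (2 ^ m) → A) × (Fin (2 ^ m) → A) × (Fin (2 ^ (m + 1)) → A)) :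
    blocksEquiv h ⟨fun ℓ => (x ^ ((1 : ℤ) - 5 ^ (ℓ : ℕ)) : Aˣ) * v.1 ℓ,
        fun ℓ => (x ^ ((1 : ℤ) + 5 ^ (ℓ : ℕ)) : Aˣ) * v.2.1 ℓ, fun i => x * v.2.2 i⟩ =
      fun c => rootChar h c * blocksEquiv h v c := by
  funext c
  obtain ⟨s, rfl⟩ := (blockExponent_bijective m).surjective c
  rw [blocksEquiv_apply_blockExponent, blocksEquiv_apply_blockExponent]
  rcases s with ℓ | ℓ | i
  · simp [blockExponent, ← rootChar_intCast h hx]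
  · simp [blockExponent, ← rootChar_intCast h hx]
  · have hu : rootPowEquiv h (oddUnit _ i) x = rootChar h (blockExponent m (.inr (.inr i))) := by
      rw [hx]
      refine (rootPowHom_root h _).trans ?_
      simp [oddUnit, blockExponent]
    simp only [Sum.elim_inr, map_mul, hu]

end Blocks

theorem stmt_7_general {R A : Type*} [CommRing R] [Nontrivial R] [CommRing A] [Algebra R A]
    (h2 : IsUnit (2 : R)) {n : ℕ} (hn : 2 ≤ n)
    (h : IsAdjoinRoot A (X ^ 2 ^ (n - 1) + 1 : R[X])) {x : Aˣ} (hx : x = h.root) :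
    ∃ T : ((Fin (2 ^ (n - 2)) → A) × (Fin (2 ^ (n - 2)) → A) × (Fin (2 ^ (n - 1)) → A))
        ≃ₗ[R] (Fin (2 ^ (n - 1)) → MonoidAlgebra R (Multiplicative (ZMod (2 ^ n)))),
      ∀ v : (Fin (2 ^ (n - 2)) → A) × (Fin (2 ^ (n - 2)) → A) × (Fin (2 ^ (n - 1)) → A),
        T ⟨fun ℓ => (x ^ ((1 : ℤ) - 5 ^ (ℓ : ℕ)) : Aˣ) * v.1 ℓ,
           fun ℓ => (x ^ ((1 : ℤ) + 5 ^ (ℓ : ℕ)) : Aˣ) * v.2.1 ℓ,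
           fun i => x * v.2.2 i⟩
          = fun i =>
              MonoidAlgebra.single (Multiplicative.ofAdd (1 : ZMod (2 ^ n))) (1 : R) * T v i := by
  obtain ⟨m, rfl⟩ := Nat.exists_eq_add_of_le' hn
  refine ⟨blocksEquiv h ≪≫ₗ twistsEquiv h h2, fun v => ?_⟩
  exact (congrArg (twistsEquiv h h2) (blocksEquiv_mul h hx v)).trans (twistsEquiv_mul h h2 _)

/-- The presentation of `An n` as `ℝ[X]` modulo `X ^ 2 ^ (n - 1) + 1`, with root `xu n`. -/
noncomputable def isAdjoinRootAn (n : ℕ) : IsAdjoinRoot (An n) (X ^ 2 ^ (n - 1) + 1 : ℝ[X]) where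
  map := Ideal.Quotient.mkₐ ℝ _
  map_surjective := Ideal.Quotient.mk_surjective
  ker_map := Ideal.Quotient.mkₐ_ker ℝ _

/-- For `n ≥ 2` there is an isomorphism of real representations of `C_{2^n}`
`(⊕_{ℓ=0}^{2^(n-2)-1} M_{1-5^ℓ}) ⊕ (⊕_{ℓ=0}^{2^(n-2)-1} M_{1+5^ℓ}) ⊕ (M_1)^{⊕2^(n-1)}
  ≅ ℝ[C_{2^n}]^{⊕2^(n-1)}`,
i.e. an `ℝ`-linear equivalence intertwining the action of the fixed generator `γ`
(on the left acting on each summand by multiplication by the indicated power of `x`,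
on the right by left multiplication in the group algebra). -/
theorem stmt_7 (n : ℕ) (hn : 2 ≤ n) :
    ∃ T : ((Fin (2 ^ (n - 2)) → An n) × (Fin (2 ^ (n - 2)) → An n) × (Fin (2 ^ (n - 1)) → An n))
        ≃ₗ[ℝ] (Fin (2 ^ (n - 1)) → MonoidAlgebra ℝ (Multiplicative (ZMod (2 ^ n)))),
      ∀ v : (Fin (2 ^ (n - 2)) → An n) × (Fin (2 ^ (n - 2)) → An n) × (Fin (2 ^ (n - 1)) → An n),
        T ⟨fun ℓ => ((xu n ^ ((1 : ℤ) - 5 ^ (ℓ : ℕ)) : (An n)ˣ) : An n) * v.1 ℓ,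
           fun ℓ => ((xu n ^ ((1 : ℤ) + 5 ^ (ℓ : ℕ)) : (An n)ˣ) : An n) * v.2.1 ℓ,
           fun i => ((xu n : An n)) * v.2.2 i⟩
          = fun i =>
              MonoidAlgebra.single (Multiplicative.ofAdd (1 : ZMod (2 ^ n))) (1 : ℝ) * T v i :=
  stmt_7_general (isUnit_iff_ne_zero.mpr two_ne_zero) hn (isAdjoinRootAn n) rfl
end

section
/- Fix n ≥ 2, let v be an integer with 0 ≤ v ≤ n − 2, and let c ∈ ℤ be a nonzero integer with 2-adic valuation v₂(c) = v. Then M_c is isomorphic, as a real representation of C_{2^n}, to the direct sum of 2^v copies of the real representation of C_{2^n} on ℝ[y]/(y^(2^(n-1-v)) + 1) in which the generator γ acts by multiplication by the image of y. -/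
open Polynomial

/-!
Let `x` and `y` be the images of `X` in `R[X]/(X^(mk) + 1)` and `R[X]/(X^k + 1)`, and let
`d e ≡ 1 (mod 2k)`.  Sending `x` to an `m`-th root `Y` of `y^e` identifies the first ring with
`(R[X]/(X^k + 1))[Y]/(Y^m - y^e)`, and `x^(md)` then corresponds to `(y^e)^d = y`, because
`y^(2k) = 1`.  The larger ring is therefore free of rank `m` over the smaller one, with `x^(md)`
acting as the scalar `y`.  An exponent `c` with `gcd(c, 2mk) = m` is of the form `md` modulo `2mk`,
with `d` prime to `2k`.
-/

section Exponents

theorem intGcd_prime_pow {p : ℕ} [hp : Fact p.Prime] {c : ℤ} (hc : c ≠ 0) (s : ℕ) :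
    c.gcd (p ^ s : ℕ) = p ^ min (padicValInt p c) s := by
  have ha : c.natAbs ≠ 0 := Int.natAbs_ne_zero.mpr hc
  rw [Int.gcd_eq_natAbs, Int.natAbs_natCast]
  refine Nat.dvd_antisymm ?_ (Nat.dvd_gcd ?_ (pow_dvd_pow p (min_le_right _ _)))
  · obtain ⟨t, hts, ht⟩ := (Nat.dvd_prime_pow hp.out).mp (Nat.gcd_dvd_right _ (p ^ s))
    have hta : t ≤ padicValInt p c :=
      (padicValNat_dvd_iff_le ha).mp (ht ▸ Nat.gcd_dvd_left _ (p ^ s))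
    exact ht ▸ pow_dvd_pow p (le_min hta hts)
  · exact (padicValNat_dvd_iff_le ha).mpr (min_le_left _ _)

theorem exists_coprime_zpow_eq_pow_mul {G : Type*} [Group G] {g : G} {m n : ℕ}
    (hmn : m * n ≠ 0) (hg : g ^ (m * n) = 1) {c : ℤ} (hc : c.gcd (m * n : ℕ) = m) :
    ∃ d : ℕ, d.Coprime n ∧ g ^ c = g ^ (m * d) := by
  obtain ⟨a, ha⟩ := Int.eq_ofNat_of_zero_le (Int.emod_nonneg c (Nat.cast_ne_zero.mpr hmn))
  have hgcd : a.gcd (m * n) = m := by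
    rw [← Int.gcd_natCast_natCast, ← ha, Int.gcd_emod, hc]
  obtain ⟨d, rfl⟩ : m ∣ a := hgcd ▸ Nat.gcd_dvd_left a (m * n)
  refine ⟨d, ?_, by rw [zpow_eq_zpow_emod' c hg, ha, zpow_natCast]⟩
  rw [Nat.gcd_mul_left] at hgcd
  exact Nat.eq_of_mul_eq_mul_left (Nat.pos_of_ne_zero (left_ne_zero_of_mul hmn))
    (hgcd.trans (mul_one m).symm)

theorem odd_and_odd_of_mul_modEq_one {d e k : ℕ} (hde : d * e ≡ 1 [MOD 2 * k]) : Odd d ∧ Odd e :=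
  Nat.odd_mul.mp (Nat.odd_iff.mpr (hde.of_mul_right k))

end Exponents

theorem adjoinRoot_X_pow_sub_C_root_pow {B : Type*} [CommRing B] (m : ℕ) (b : B) :
    AdjoinRoot.root (X ^ m - C b) ^ m = AdjoinRoot.of _ b := by
  have h := AdjoinRoot.eval₂_root (X ^ m - C b)
  rw [eval₂_sub, eval₂_X_pow, eval₂_C] at h
  exact sub_eq_zero.mp h

theorem nonempty_adjoinRoot_X_pow_sub_C_linearEquiv {B : Type*} [CommRing B] {m : ℕ} (hm : m ≠ 0)
    (b : B) : Nonempty (AdjoinRoot (X ^ m - C b) ≃ₗ[B] (Fin m → B)) := by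
  cases subsingleton_or_nontrivial B
  · have := Module.subsingleton B (AdjoinRoot (X ^ m - C b))
    exact ⟨0⟩
  · let powers := AdjoinRoot.powerBasisAux' (monic_X_pow_sub_C b hm)
    exact ⟨(powers.reindex (finCongr natDegree_X_pow_sub_C)).equivFun⟩

/-- The negacyclic ring `R[X]/(X^k + 1)`, on which the class of `X` acts with `k`-th power `-1`.
It is `An n` for `R = ℝ` and `k = 2^(n-1)`. -/
abbrev Negacyclic (R : Type*) [CommRing R] (k : ℕ) : Type _ :=
  AdjoinRoot (X ^ k + 1 : R[X])

namespace Negacyclic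

open AdjoinRoot

variable (R : Type*) [CommRing R]

/-- The class of `X` in the negacyclic ring. -/
noncomputable abbrev gen (k : ℕ) : Negacyclic R k :=
  root (X ^ k + 1)

theorem gen_pow (k : ℕ) : gen R k ^ k = -1 := by
  have h := eval₂_root (X ^ k + 1 : R[X])
  rw [eval₂_add, eval₂_X_pow, eval₂_one] at h
  exact eq_neg_of_add_eq_zero_left h

theorem gen_pow_two_mul (k : ℕ) : gen R k ^ (2 * k) = 1 := by
  rw [mul_comm, pow_mul, gen_pow, neg_one_sq]

variable {R}

/-- The universal property of the negacyclic ring: the algebra homomorphism that sends the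
generator to a given `k`-th root of `-1`. -/
noncomputable def lift {S : Type*} [CommRing S] [Algebra R S] {k : ℕ} (s : S) (hs : s ^ k = -1) :
    Negacyclic R k →ₐ[R] S :=
  liftAlgHom (X ^ k + 1) (Algebra.ofId R S) s (by simp [hs])

@[simp]
theorem lift_gen {S : Type*} [CommRing S] [Algebra R S] {k : ℕ} (s : S) (hs : s ^ k = -1) :
    lift s hs (gen R k) = s :=
  liftAlgHom_root ..

variable (R) in
/-- The extension `(R[X]/(X^k + 1))[Y]/(Y^m - y^e)` of the negacyclic ring obtained by adjoining
an `m`-th root `Y` of the `e`-th power of its generator `y`. -/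
abbrev RootExtension (k m e : ℕ) : Type _ :=
  AdjoinRoot (X ^ m - C (gen R k ^ e))

variable {k m d e : ℕ}

theorem gen_pow_mul_pow (hd : Odd d) : (gen R (m * k) ^ (m * d)) ^ k = -1 := by
  rw [← pow_mul, mul_right_comm, pow_mul, gen_pow, hd.neg_one_pow]

theorem gen_pow_mul_pow_of_modEq (hde : d * e ≡ 1 [MOD 2 * k]) :
    (gen R (m * k) ^ (m * d)) ^ e = gen R (m * k) ^ m := by
  have hmde : m * (d * e) ≡ m * 1 [MOD 2 * (m * k)] := by
    simpa only [mul_left_comm] using hde.mul_left' m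
  rw [← pow_mul, mul_assoc, pow_eq_pow_of_modEq hmde (gen_pow_two_mul R (m * k)), mul_one]

namespace RootExtension

variable (R k m e) in
/-- The adjoined `m`-th root. -/
noncomputable abbrev adjoined : RootExtension R k m e :=
  root (X ^ m - C (gen R k ^ e))

theorem adjoined_pow : adjoined R k m e ^ m = of _ (gen R k) ^ e := by
  rw [adjoinRoot_X_pow_sub_C_root_pow, map_pow]

theorem adjoined_pow_mul_eq_neg_one (he : Odd e) : adjoined R k m e ^ (m * k) = -1 := by
  rw [pow_mul, adjoined_pow, pow_right_comm, ← map_pow, gen_pow, map_neg, map_one, he.neg_one_pow]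

theorem adjoined_pow_mul_eq_of_gen (hde : d * e ≡ 1 [MOD 2 * k]) :
    adjoined R k m e ^ (m * d) = of _ (gen R k) := by
  rw [pow_mul, adjoined_pow, ← pow_mul, mul_comm, ← map_pow,
    pow_eq_pow_of_modEq hde (gen_pow_two_mul R k), pow_one]

end RootExtension

open RootExtension

/-- The identification of `R[x]/(x^(mk) + 1)` with `(R[y]/(y^k + 1))[Y]/(Y^m - y^e)` that sends
`x` to `Y`; its inverse sends `y` to `x^(md)`. -/
noncomputable def equivRootExtension (hde : d * e ≡ 1 [MOD 2 * k]) :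
    Negacyclic R (m * k) ≃ₐ[R] RootExtension R k m e :=
  AlgEquiv.ofAlgHom
    (lift (adjoined R k m e) (adjoined_pow_mul_eq_neg_one (odd_and_odd_of_mul_modEq_one hde).2))
    (liftAlgHom _ (lift _ (gen_pow_mul_pow (odd_and_odd_of_mul_modEq_one hde).1)) (gen R (m * k))
      (by rw [eval₂_sub, eval₂_X_pow, eval₂_C, map_pow]; simp [gen_pow_mul_pow_of_modEq hde]))
    (by ext <;> simp [adjoined_pow_mul_eq_of_gen hde])
    (by ext; simp)

theorem equivRootExtension_gen_pow (hde : d * e ≡ 1 [MOD 2 * k]) :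
    equivRootExtension (R := R) hde (gen R (m * k) ^ (m * d)) = of _ (gen R k) := by
  have hgen : equivRootExtension (R := R) (m := m) hde (gen R (m * k)) = adjoined R k m e :=
    lift_gen _ (adjoined_pow_mul_eq_neg_one (odd_and_odd_of_mul_modEq_one hde).2)
  rw [map_pow, hgen, adjoined_pow_mul_eq_of_gen hde]

theorem exists_linearEquiv_pi_gen_pow_mul (hm : m ≠ 0) (hk : k ≠ 0) (hd : d.Coprime (2 * k)) :
    ∃ T : Negacyclic R (m * k) ≃ₗ[R] (Fin m → Negacyclic R k),
      ∀ a, T (gen R (m * k) ^ (m * d) * a) = gen R k • T a := by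
  obtain ⟨e, -, hde : d * e ≡ 1 [MOD 2 * k]⟩ :=
    Nat.exists_mul_mod_eq_of_coprime 1 hd (mul_ne_zero two_ne_zero hk)
  obtain ⟨E⟩ := nonempty_adjoinRoot_X_pow_sub_C_linearEquiv hm (gen R k ^ e)
  refine ⟨(equivRootExtension hde).toLinearEquiv ≪≫ₗ E.restrictScalars R, fun a => ?_⟩
  change E (equivRootExtension hde (gen R (m * k) ^ (m * d) * a)) =
    gen R k • E (equivRootExtension hde a)
  rw [map_mul, equivRootExtension_gen_pow, ← AdjoinRoot.algebraMap_eq, ← Algebra.smul_def, map_smul]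

end Negacyclic

open Negacyclic in
theorem stmt_8_general {R : Type*} [CommRing R] {N m k : ℕ} (hN : N ≠ 0) (hmk : m * k = N) {c : ℤ}
    (hc : c.gcd (2 * N : ℕ) = m) (x : (Negacyclic R N)ˣ) (hx : (x : Negacyclic R N) = gen R N) :
    ∃ T : Negacyclic R N ≃ₗ[R] (Fin m → Negacyclic R k),
      ∀ a, T (((x ^ c : (Negacyclic R N)ˣ) : Negacyclic R N) * a) = gen R k • T a := by
  subst hmk
  have hx_pow : x ^ (m * (2 * k)) = 1 := by
    ext
    rw [Units.val_pow_eq_pow_val, hx, mul_left_comm, gen_pow_two_mul, Units.val_one]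
  have hmk : m * (2 * k) ≠ 0 := by rwa [mul_left_comm, mul_ne_zero_iff_left two_ne_zero]
  rw [mul_left_comm] at hc
  obtain ⟨d, hd, hxc⟩ := exists_coprime_zpow_eq_pow_mul hmk hx_pow hc
  rw [hxc, Units.val_pow_eq_pow_val, hx]
  exact exists_linearEquiv_pi_gen_pow_mul (left_ne_zero_of_mul hN) (right_ne_zero_of_mul hN) hd

/-- For `n ≥ 2`, `0 ≤ v ≤ n - 2` and `c` a nonzero integer with `v₂(c) = v`, the
representation `M c` (i.e. `An n` with the generator `γ` of `C_{2^n}` acting by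
multiplication by `x^c`) is isomorphic to the direct sum of `2^v` copies of the
representation `ℝ[y]/(y^(2^(n-1-v)) + 1)` on which `γ` acts by multiplication by
the image of `y`. -/
theorem stmt_8 (n : ℕ) (hn : 2 ≤ n) (v : ℕ) (hv : v ≤ n - 2) (c : ℤ) (hc : c ≠ 0)
    (hval : padicValInt 2 c = v) :
    ∃ T : An n ≃ₗ[ℝ] (Fin (2 ^ v) → ℝ[X] ⧸ Ideal.span {(X : ℝ[X]) ^ 2 ^ (n - 1 - v) + 1}),
      ∀ a : An n,
        T (((xu n ^ c : (An n)ˣ) : An n) * a)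
          = fun i => Ideal.Quotient.mk (Ideal.span {(X : ℝ[X]) ^ 2 ^ (n - 1 - v) + 1}) X * T a i := by
  have hdim : 2 ^ v * 2 ^ (n - 1 - v) = 2 ^ (n - 1) := by rw [← pow_add]; congr 1; omega
  have hgcd : c.gcd (2 * 2 ^ (n - 1) : ℕ) = 2 ^ v := by
    rw [← pow_succ', intGcd_prime_pow hc, hval, min_eq_left (by omega)]
  exact stmt_8_general (by positivity) hdim hgcd (xu n) rfl
end

section
/- Fix n ≥ 2 and let H = ⟨γ^(2^(n-2))⟩ ⊆ C_{2^n} be the subgroup of order 4. Set W_n = ⊕_{ℓ=0}^{2^(n-2)−1} (M_{1−5^ℓ} ⊕ M_{1+5^ℓ}). Then the restriction of W_n to H is isomorphic, as a real representation of H, to the direct sum of 2^(2n-3) copies of the trivial one-dimensional representation of H and 2^(2n-3) copies of the one-dimensional representation of H on which the generator γ^(2^(n-2)) acts by −1. -/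
open Polynomial

/-!
Put `y = x ^ 2 ^ (n - 2)`, so that `y ^ 2 = -1` and `γ ^ 2 ^ (n - 2)` acts on `M_c` by `y ^ c`.
Since `5 ^ ℓ ≡ 1` modulo `4`, the exponents `1 - 5 ^ ℓ` and `1 + 5 ^ ℓ` are `0` and `2` modulo `4`,
so every `M_{1 - 5 ^ ℓ}` is trivial over the subgroup of order `4` and on every `M_{1 + 5 ^ ℓ}`
the generator acts by `-1`. Only the two dimensions remain to be counted.
-/

lemma zpow_mul_two_pow {G : Type*} [DivisionMonoid G] (g : G) (c : ℤ) (k : ℕ) :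
    g ^ (c * 2 ^ k) = (g ^ 2 ^ k) ^ c := by
  rw [zpow_mul']
  norm_cast

section SquareRootOfNegOne

variable {G : Type*} [DivisionMonoid G] [HasDistribNeg G] {g : G} {a : ℤ}

lemma zpow_two_mul_of_sq_eq_neg_one (hg : g ^ 2 = -1) (k : ℤ) : g ^ (2 * k) = (-1) ^ k := by
  rw [zpow_mul, zpow_ofNat, hg]

lemma zpow_one_sub_of_sq_eq_neg_one (hg : g ^ 2 = -1) (ha : a ≡ 1 [ZMOD 4]) :
    g ^ (1 - a) = 1 := by
  obtain ⟨k, hk⟩ := ha.dvd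
  rw [show 1 - a = 2 * (2 * k) by linarith, zpow_two_mul_of_sq_eq_neg_one hg,
    (even_two_mul k).neg_one_zpow]

lemma zpow_one_add_of_sq_eq_neg_one (hg : g ^ 2 = -1) (ha : a ≡ 1 [ZMOD 4]) :
    g ^ (1 + a) = -1 := by
  obtain ⟨k, hk⟩ := ha.symm.dvd
  rw [show 1 + a = 2 * (2 * k + 1) by linarith, zpow_two_mul_of_sq_eq_neg_one hg,
    (odd_two_mul_add_one k).neg_one_zpow]

end SquareRootOfNegOne

lemma five_pow_modEq_one (l : ℕ) : (5 : ℤ) ^ l ≡ 1 [ZMOD 4] := by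
  simpa using (show (5 : ℤ) ≡ 1 [ZMOD 4] by decide).pow l

section Xu

variable (n : ℕ)

lemma xu_pow_two_pow_sub_one : xu n ^ 2 ^ (n - 1) = -1 := by
  ext
  have h := Ideal.Quotient.mk_singleton_self ((X : ℝ[X]) ^ 2 ^ (n - 1) + 1)
  rw [map_add, map_pow, map_one] at h
  exact eq_neg_of_add_eq_zero_left h

variable {n}

lemma xu_pow_two_pow_sub_two_sq (hn : 2 ≤ n) : (xu n ^ 2 ^ (n - 2)) ^ 2 = -1 := by
  rw [← pow_mul, ← pow_succ, show n - 2 + 1 = n - 1 by omega, xu_pow_two_pow_sub_one]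

lemma xu_zpow_one_sub_five_pow (hn : 2 ≤ n) (l : ℕ) :
    xu n ^ (((1 : ℤ) - 5 ^ l) * 2 ^ (n - 2)) = 1 := by
  rw [zpow_mul_two_pow,
    zpow_one_sub_of_sq_eq_neg_one (xu_pow_two_pow_sub_two_sq hn) (five_pow_modEq_one l)]

lemma xu_zpow_one_add_five_pow (hn : 2 ≤ n) (l : ℕ) :
    xu n ^ (((1 : ℤ) + 5 ^ l) * 2 ^ (n - 2)) = -1 := by
  rw [zpow_mul_two_pow,
    zpow_one_add_of_sq_eq_neg_one (xu_pow_two_pow_sub_two_sq hn) (five_pow_modEq_one l)]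

end Xu

namespace An

lemma finrank_eq (n : ℕ) : Module.finrank ℝ (An n) = 2 ^ (n - 1) := by
  rw [finrank_quotient_span_eq_natDegree, ← C_1, natDegree_X_pow_add_C]

instance (n : ℕ) : Module.Finite ℝ (An n) :=
  Module.finite_of_finrank_pos (by rw [finrank_eq]; positivity)

lemma finrank_fun (ι : Type*) [Fintype ι] (n : ℕ) :
    Module.finrank ℝ (ι → An n) = Fintype.card ι * 2 ^ (n - 1) := by
  simp only [Module.finrank_pi_fintype, finrank_eq, Finset.sum_const, Finset.card_univ,
    smul_eq_mul]

end An

/-- Corollary 2.18 (case `m = 1`): let `H = ⟨γ^(2^(n-2))⟩ ⊆ C_{2^n}` be the subgroup of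
order `4` and `W_n = ⊕_{ℓ=0}^{2^(n-2)-1} (M_{1-5^ℓ} ⊕ M_{1+5^ℓ})`.  The restriction of
`W_n` to `H` is isomorphic to `2^(2n-3)` copies of the trivial one-dimensional real
representation of `H` plus `2^(2n-3)` copies of the one-dimensional representation on
which the generator `γ^(2^(n-2))` acts by `-1`: there is an `ℝ`-linear equivalence
intertwining the action of `γ^(2^(n-2))` (which acts on `M_c` by multiplication by
`x^(c·2^(n-2))`) with the action `(w₁, w₂) ↦ (w₁, -w₂)`. -/
theorem stmt_13 (n : ℕ) (hn : 2 ≤ n) :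
    ∃ T : ((Fin (2 ^ (n - 2)) → An n) × (Fin (2 ^ (n - 2)) → An n))
        ≃ₗ[ℝ] ((Fin (2 ^ (2 * n - 3)) → ℝ) × (Fin (2 ^ (2 * n - 3)) → ℝ)),
      ∀ v : (Fin (2 ^ (n - 2)) → An n) × (Fin (2 ^ (n - 2)) → An n),
        T ⟨fun ℓ => ((xu n ^ (((1 : ℤ) - 5 ^ (ℓ : ℕ)) * 2 ^ (n - 2)) : (An n)ˣ) : An n) * v.1 ℓ,
           fun ℓ => ((xu n ^ (((1 : ℤ) + 5 ^ (ℓ : ℕ)) * 2 ^ (n - 2)) : (An n)ˣ) : An n) * v.2 ℓ⟩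
          = ((T v).1, fun i => -((T v).2 i)) := by
  have hdim : Module.finrank ℝ (Fin (2 ^ (n - 2)) → An n) =
      Module.finrank ℝ (Fin (2 ^ (2 * n - 3)) → ℝ) := by
    rw [An.finrank_fun, Fintype.card_fin, Module.finrank_fin_fun, ← pow_add,
      show n - 2 + (n - 1) = 2 * n - 3 by omega]
  let e := LinearEquiv.ofFinrankEq _ _ hdim
  refine ⟨e.prodCongr e, fun v => ?_⟩
  simp only [xu_zpow_one_sub_five_pow hn, xu_zpow_one_add_five_pow hn, Units.val_one,
    Units.val_neg, one_mul, neg_one_mul]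
  exact Prod.ext rfl (map_neg e v.2)
end
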